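/- arXiv:1402.4351 — 3 statements merged into one kernel-verified Lean document; each statement's English description precedes it below -/
import Mathlib

section
/- Let (X,P) be a poset on a nonempty finite set X. If dim(X,P) = n, then there exists a sequence of recursive partial-conjugates P_1,…,P_n on X with P_1 = P (hence P is at most n-fold). -/
/-- `P` is a partial order (reflexive, antisymmetric, transitive) on `X`. -/
def IsPartialOrderRel {X : Type*} (P : X → X → Prop) : Prop :=
  (∀ x, P x x) ∧ (∀ x y, P x y → P y x → x = y) ∧ (∀ x y z, P x y → P y z → P x z)

/-- `L` is a linear order (complete, antisymmetric, transitive) on `X`. -/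
def IsLinearOrderRel {X : Type*} (L : X → X → Prop) : Prop :=
  (∀ x y, L x y ∨ L y x) ∧ (∀ x y, L x y → L y x → x = y) ∧ (∀ x y z, L x y → L y z → L x z)

/-- The dual relation: `x P^d y ↔ y P x`. -/
def dualRel {X : Type*} (P : X → X → Prop) : X → X → Prop := fun x y => P y x

/-- Union of two binary relations. -/
def relUnion {X : Type*} (P Q : X → X → Prop) : X → X → Prop := fun x y => P x y ∨ Q x y

/-- `x` and `y` are comparable in `P`. -/
def Compar {X : Type*} (P : X → X → Prop) (x y : X) : Prop := P x y ∨ P y x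

/-- `P` and `Q` are conjugate: every pair of distinct elements is comparable
in exactly one of them. -/
def ConjugateRel {X : Type*} (P Q : X → X → Prop) : Prop :=
  ∀ x y : X, x ≠ y → Xor' (Compar P x y) (Compar Q x y)

/-- `Q` is a partial-conjugate of `P`:
(i) every pair of distinct elements is comparable in at most one of `P`, `Q`;
(ii) `P ∪ Q` is a partial order;
(iii) the transitive closure of `P ∪ Q^d` is a partial order. -/
def IsPartialConjugate {X : Type*} (P Q : X → X → Prop) : Prop :=
  (∀ x y : X, x ≠ y → ¬(Compar P x y ∧ Compar Q x y)) ∧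
  IsPartialOrderRel (relUnion P Q) ∧
  IsPartialOrderRel (Relation.TransGen (relUnion P (dualRel Q)))

/-- The union `P₁ ∪ ⋯ ∪ P_k` (indices from 1 to `k`). -/
def unionUpTo {X : Type*} (Ps : ℕ → X → X → Prop) (k : ℕ) : X → X → Prop :=
  fun x y => ∃ i, 1 ≤ i ∧ i ≤ k ∧ Ps i x y

/-- `Ps 1, …, Ps n` is a sequence of recursive partial-conjugates. -/
def RecPartialConjSeq {X : Type*} (n : ℕ) (Ps : ℕ → X → X → Prop) : Prop :=
  (∀ i, 1 ≤ i → i ≤ n → IsPartialOrderRel (Ps i)) ∧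
  (∀ k, 2 ≤ k → k ≤ n - 1 → IsPartialConjugate (unionUpTo Ps (k - 1)) (Ps k)) ∧
  ConjugateRel (unionUpTo Ps (n - 1)) (Ps n)

/-- `P` is the intersection of `n` linear orders on `X`. -/
def RealizedBy {X : Type*} (n : ℕ) (P : X → X → Prop) : Prop :=
  ∃ L : Fin n → X → X → Prop, (∀ i, IsLinearOrderRel (L i)) ∧
    ∀ x y, P x y ↔ ∀ i, L i x y

/-- The dimension of the poset `(X, P)`: the smallest `n` such that `P` is the
intersection of `n` linear orders. -/
noncomputable def posetDim {X : Type*} (P : X → X → Prop) : ℕ :=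
  sInf {n | RealizedBy n P}

/-- `P` is `n`-fold: `n` is the smallest integer such that there is a sequence of
recursive partial-conjugates `P₁, …, P_n` with `P₁ = P`. -/
def IsNFold {X : Type*} (n : ℕ) (P : X → X → Prop) : Prop :=
  IsLeast {m | ∃ Ps : ℕ → X → X → Prop, RecPartialConjSeq m Ps ∧ Ps 1 = P} n

/-!
Let `P = L₁ ∩ ⋯ ∩ Lₙ` with all `Lᵢ` linear, and put `Qₖ = Lₖ ∩ ⋯ ∩ Lₙ`, so that `Q₁ = P` and
`Qₙ = Lₙ`. Since `Lₖ` is complete, it splits `Qₖ₊₁` into the part `Qₖ₊₁ ∩ Lₖ = Qₖ` that agrees with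
`Lₖ` and the part `Pₖ₊₁ = Qₖ₊₁ ∩ Lₖᵈ` that is reversed by it. These parts have no comparable pair
in common, their union is the partial order `Qₖ₊₁`, and reversing the second one keeps both inside
`Lₖ`; hence `Pₖ₊₁` is a partial-conjugate of `Qₖ`. Starting from `P₁ = P`, the union
`P₁ ∪ ⋯ ∪ Pₖ` is `Qₖ`, and `Pₙ` is a conjugate of `Qₙ₋₁` because `Qₙ = Lₙ` is linear.
-/

section Relations

variable {X : Type*} {P Q R L : X → X → Prop}

theorem IsLinearOrderRel.isPartialOrderRel (hL : IsLinearOrderRel L) : IsPartialOrderRel L :=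
  ⟨fun x => or_self_iff.1 (hL.1 x x), hL.2⟩

theorem IsPartialOrderRel.dualRel (hP : IsPartialOrderRel P) : IsPartialOrderRel (dualRel P) :=
  ⟨hP.1, fun x y hxy hyx => hP.2.1 x y hyx hxy, fun x y z hxy hyz => hP.2.2 z y x hyz hxy⟩

theorem IsPartialOrderRel.inf (hP : IsPartialOrderRel P) (hQ : IsPartialOrderRel Q) :
    IsPartialOrderRel (P ⊓ Q) :=
  ⟨fun x => ⟨hP.1 x, hQ.1 x⟩, fun x y hxy hyx => hP.2.1 x y hxy.1 hyx.1,
    fun x y z hxy hyz => ⟨hP.2.2 x y z hxy.1 hyz.1, hQ.2.2 x y z hxy.2 hyz.2⟩⟩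

theorem isPartialOrderRel_transGen_of_le (hP : IsPartialOrderRel P) (hR : ∀ x, R x x)
    (hRP : R ≤ P) : IsPartialOrderRel (Relation.TransGen R) := by
  have : IsTrans X P := ⟨hP.2.2⟩
  have hle : Relation.TransGen R ≤ P := Relation.transGen_minimal hRP
  exact ⟨fun x => .single (hR x), fun x y hxy hyx => hP.2.1 x y (hle x y hxy) (hle y x hyx),
    fun _ _ _ => .trans⟩

theorem compar_relUnion {x y : X} : Compar (relUnion P Q) x y ↔ Compar P x y ∨ Compar Q x y :=
  or_or_or_comm

theorem relUnion_inf_inf_dualRel (hL : ∀ x y, Compar L x y) :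
    relUnion (Q ⊓ L) (Q ⊓ dualRel L) = Q := by
  funext x y
  exact propext ⟨fun h => h.elim And.left And.left, fun h => (hL x y).imp (⟨h, ·⟩) (⟨h, ·⟩)⟩

theorem not_compar_inf_and_compar_inf_dualRel (hQ : IsPartialOrderRel Q)
    (hL : IsPartialOrderRel L) {x y : X} (hxy : x ≠ y) :
    ¬(Compar (Q ⊓ L) x y ∧ Compar (Q ⊓ dualRel L) x y) := by
  rintro ⟨⟨hQ₁, hL₁⟩ | ⟨hQ₁, hL₁⟩, ⟨hQ₂, hL₂⟩ | ⟨hQ₂, hL₂⟩⟩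
  · exact hxy (hL.2.1 x y hL₁ hL₂)
  · exact hxy (hQ.2.1 x y hQ₁ hQ₂)
  · exact hxy (hQ.2.1 x y hQ₂ hQ₁)
  · exact hxy (hL.2.1 x y hL₂ hL₁)

theorem isPartialConjugate_inf_inf_dualRel (hQ : IsPartialOrderRel Q) (hL : IsLinearOrderRel L) :
    IsPartialConjugate (Q ⊓ L) (Q ⊓ dualRel L) := by
  have hL' := hL.isPartialOrderRel
  refine ⟨fun x y => not_compar_inf_and_compar_inf_dualRel hQ hL', ?_, ?_⟩
  · rwa [relUnion_inf_inf_dualRel hL.1]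
  · exact isPartialOrderRel_transGen_of_le hL' (fun x => Or.inl ⟨hQ.1 x, hL'.1 x⟩)
      fun x y h => h.elim And.right And.right

theorem conjugateRel_inf_inf_dualRel (hQ : IsLinearOrderRel Q) (hL : IsLinearOrderRel L) :
    ConjugateRel (Q ⊓ L) (Q ⊓ dualRel L) := by
  intro x y hxy
  have hcompar : Compar (relUnion (Q ⊓ L) (Q ⊓ dualRel L)) x y := by
    rw [relUnion_inf_inf_dualRel hL.1]
    exact hQ.1 x y
  exact (xor_iff_or_and_not_and _ _).2 ⟨compar_relUnion.1 hcompar,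
    not_compar_inf_and_compar_inf_dualRel hQ.isPartialOrderRel hL.isPartialOrderRel hxy⟩

end Relations

section UnionUpTo

variable {X : Type*} (Ps : ℕ → X → X → Prop)

theorem unionUpTo_zero : unionUpTo Ps 0 = ⊥ := by
  funext x y
  exact propext ⟨fun ⟨_, h₁, h₀, _⟩ => by omega, False.elim⟩

theorem unionUpTo_succ (k : ℕ) :
    unionUpTo Ps (k + 1) = relUnion (unionUpTo Ps k) (Ps (k + 1)) := by
  funext x y
  refine propext ⟨?_, ?_⟩
  · rintro ⟨i, h₁, hik, h⟩
    rcases Nat.le_succ_iff.1 hik with hik | rfl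
    · exact Or.inl ⟨i, h₁, hik, h⟩
    · exact Or.inr h
  · rintro (⟨i, h₁, hik, h⟩ | h)
    · exact ⟨i, h₁, hik.trans k.le_succ, h⟩
    · exact ⟨k + 1, k.succ_pos, le_rfl, h⟩

theorem unionUpTo_one : unionUpTo Ps 1 = Ps 1 := by
  funext x y
  rw [unionUpTo_succ, unionUpTo_zero]
  exact false_or _

end UnionUpTo

section ReversalSequence

variable {X : Type*} {n : ℕ}

/-- The intersection `Lₖ ∩ Lₖ₊₁ ∩ ⋯` of the tail of a family of relations indexed from `0`: the
`Qₖ₊₁` of the proof idea, whose indices start from `1`. -/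
def tailInter (L : Fin n → X → X → Prop) (k : ℕ) : X → X → Prop :=
  fun x y => ∀ i : Fin n, k ≤ i → L i x y

/-- The sequence of recursive partial-conjugates attached to a family of linear orders: its first
term is the intersection of the family, and term `j + 2` is the part of `tailInter L (j + 1)`
reversed by `L j`. Term `0` repeats term `1`, and for `j ≥ n` no reversal is imposed. -/
def reversalSeq (L : Fin n → X → X → Prop) : ℕ → X → X → Prop
  | j + 2 => tailInter L (j + 1) ⊓ dualRel fun x y => ∀ hj : j < n, L ⟨j, hj⟩ x y
  | _ => tailInter L 0

variable {L : Fin n → X → X → Prop}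

theorem tailInter_eq_inf (i : Fin n) : tailInter L i = tailInter L (i + 1) ⊓ L i := by
  funext x y
  refine propext ⟨fun h => ⟨fun j hj => h j (by omega), h i le_rfl⟩, fun ⟨h, hi⟩ j hj => ?_⟩
  rcases hj.eq_or_lt with hij | hij
  · rwa [← Fin.ext hij]
  · exact h j hij

theorem reversalSeq_add_two (i : Fin n) :
    reversalSeq L (i + 2) = tailInter L (i + 1) ⊓ dualRel (L i) := by
  simp only [reversalSeq, Fin.is_lt, forall_true_left, Fin.eta]

theorem isPartialOrderRel_tailInter (hL : ∀ i, IsPartialOrderRel (L i)) {k : ℕ} (hk : k < n) :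
    IsPartialOrderRel (tailInter L k) :=
  ⟨fun x i _ => (hL i).1 x,
    fun x y hxy hyx => (hL ⟨k, hk⟩).2.1 x y (hxy _ le_rfl) (hyx _ le_rfl),
    fun x y z hxy hyz i hi => (hL i).2.2 x y z (hxy i hi) (hyz i hi)⟩

theorem tailInter_last {m : ℕ} (L : Fin (m + 1) → X → X → Prop) :
    tailInter L m = L (Fin.last m) := by
  funext x y
  refine propext ⟨fun h => h (Fin.last m) le_rfl, fun h i hi => ?_⟩
  rwa [Fin.last_le_iff.1 (Fin.le_def.2 hi)]

theorem unionUpTo_reversalSeq (hL : ∀ i x y, Compar (L i) x y) {k : ℕ} (hk : k ≤ n) :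
    unionUpTo (reversalSeq L) (k + 1) = tailInter L k := by
  induction k with
  | zero => exact unionUpTo_one _
  | succ j ih =>
    let i : Fin n := ⟨j, hk⟩
    calc unionUpTo (reversalSeq L) (j + 2)
      _ = relUnion (tailInter L i) (reversalSeq L (i + 2)) := by
        rw [unionUpTo_succ, ih (Nat.le_of_succ_le hk)]
      _ = relUnion (tailInter L (i + 1) ⊓ L i) (tailInter L (i + 1) ⊓ dualRel (L i)) := by
        rw [tailInter_eq_inf, reversalSeq_add_two]
      _ = tailInter L (j + 1) := relUnion_inf_inf_dualRel (hL i)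

theorem isPartialOrderRel_reversalSeq (hL : ∀ i, IsPartialOrderRel (L i)) {k : ℕ} (hk₁ : 1 ≤ k)
    (hkn : k ≤ n) : IsPartialOrderRel (reversalSeq L k) := by
  match k with
  | 1 => exact isPartialOrderRel_tailInter hL hkn
  | j + 2 =>
    let i : Fin n := ⟨j, by omega⟩
    rw [reversalSeq_add_two i]
    exact (isPartialOrderRel_tailInter hL hkn).inf (hL i).dualRel

theorem isPartialConjugate_reversalSeq (hL : ∀ i, IsLinearOrderRel (L i)) {j : ℕ}
    (hj : j + 1 < n) :
    IsPartialConjugate (unionUpTo (reversalSeq L) (j + 1)) (reversalSeq L (j + 2)) := by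
  let i : Fin n := ⟨j, by omega⟩
  rw [unionUpTo_reversalSeq (fun i => (hL i).1) (by omega), tailInter_eq_inf i,
    reversalSeq_add_two i]
  exact isPartialConjugate_inf_inf_dualRel
    (isPartialOrderRel_tailInter (fun i => (hL i).isPartialOrderRel) hj) (hL i)

theorem conjugateRel_reversalSeq (hL : ∀ i, IsLinearOrderRel (L i)) :
    ConjugateRel (unionUpTo (reversalSeq L) (n - 1)) (reversalSeq L n) := by
  match n with
  | 0 =>
    rw [unionUpTo_zero]
    exact fun x y _ => Or.inr ⟨Or.inl fun i => i.elim0, or_self_iff.1⟩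
  | 1 =>
    have hlast : IsLinearOrderRel (tailInter L 0) := (tailInter_last L).symm ▸ hL _
    rw [unionUpTo_zero]
    exact fun x y _ => Or.inr ⟨hlast.1 x y, or_self_iff.1⟩
  | m + 2 =>
    let i : Fin (m + 2) := ⟨m, by omega⟩
    have hlast : IsLinearOrderRel (tailInter L (m + 1)) := (tailInter_last L).symm ▸ hL _
    rw [Nat.add_succ_sub_one, unionUpTo_reversalSeq (fun i => (hL i).1) (by omega),
      tailInter_eq_inf i, reversalSeq_add_two i]
    exact conjugateRel_inf_inf_dualRel hlast (hL i)

theorem recPartialConjSeq_reversalSeq (hL : ∀ i, IsLinearOrderRel (L i)) :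
    RecPartialConjSeq n (reversalSeq L) := by
  refine ⟨fun k => isPartialOrderRel_reversalSeq fun i => (hL i).isPartialOrderRel,
    fun k hk₂ hkn => ?_, conjugateRel_reversalSeq hL⟩
  obtain ⟨j, rfl⟩ := Nat.exists_eq_add_of_le' hk₂
  exact isPartialConjugate_reversalSeq hL (by omega)

end ReversalSequence

section Realizers

variable {X : Type*} {P : X → X → Prop}

/-- The least transitive relation containing a partial order `P` and the pair `(u, v)`. Its linear
extensions are the linear extensions of `P` that place `u` below `v`. -/
def adjoinPair (P : X → X → Prop) (u v : X) : X → X → Prop :=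
  fun a b => P a b ∨ P a u ∧ P v b

theorem IsPartialOrderRel.adjoinPair (hP : IsPartialOrderRel P) {u v : X} (hvu : ¬P v u) :
    IsPartialOrderRel (adjoinPair P u v) := by
  obtain ⟨hrefl, hanti, htrans⟩ := hP
  refine ⟨fun a => Or.inl (hrefl a), ?_, ?_⟩
  · rintro a b (hab | ⟨hau, hvb⟩) (hba | ⟨hbu, hva⟩)
    · exact hanti a b hab hba
    · exact absurd (htrans v a u hva (htrans a b u hab hbu)) hvu
    · exact absurd (htrans v b u hvb (htrans b a u hba hau)) hvu
    · exact absurd (htrans v b u hvb hbu) hvu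
  · rintro a b c (hab | ⟨hau, hvb⟩) (hbc | ⟨hbu, hvc⟩)
    · exact Or.inl (htrans a b c hab hbc)
    · exact Or.inr ⟨htrans a b u hab hbu, hvc⟩
    · exact Or.inr ⟨hau, htrans v b c hvb hbc⟩
    · exact Or.inr ⟨hau, hvc⟩

theorem IsPartialOrderRel.exists_le_isLinearOrderRel (hP : IsPartialOrderRel P) :
    ∃ L, IsLinearOrderRel L ∧ P ≤ L := by
  have : IsPartialOrder X P := { refl := hP.1, antisymm := hP.2.1, trans := hP.2.2 }
  obtain ⟨L, hL, hPL⟩ := extend_partialOrder P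
  exact ⟨L, ⟨hL.total, hL.antisymm, hL.trans⟩, hPL⟩

theorem IsPartialOrderRel.exists_le_isLinearOrderRel_imp (hP : IsPartialOrderRel P) (x y : X) :
    ∃ L, IsLinearOrderRel L ∧ P ≤ L ∧ (L x y → P x y) := by
  by_cases hxy : P x y
  · obtain ⟨L, hL, hPL⟩ := hP.exists_le_isLinearOrderRel
    exact ⟨L, hL, hPL, fun _ => hxy⟩
  · obtain ⟨L, hL, hle⟩ := (hP.adjoinPair hxy).exists_le_isLinearOrderRel
    have hyx : L y x := hle y x (Or.inr ⟨hP.1 y, hP.1 x⟩)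
    refine ⟨L, hL, fun a b hab => hle a b (Or.inl hab), fun hxy' => ?_⟩
    exact hL.2.1 x y hxy' hyx ▸ hP.1 x

theorem realizedBy_card {ι : Type*} [Finite ι] {L : ι → X → X → Prop}
    (hL : ∀ i, IsLinearOrderRel (L i)) (hPL : ∀ x y, P x y ↔ ∀ i, L i x y) :
    RealizedBy (Nat.card ι) P :=
  ⟨fun k => L ((Finite.equivFin ι).symm k), fun _ => hL _, fun x y =>
    (hPL x y).trans (Finite.equivFin ι).symm.forall_congr_right.symm⟩

theorem IsPartialOrderRel.exists_realizedBy [Finite X] (hP : IsPartialOrderRel P) :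
    ∃ n, RealizedBy n P := by
  choose L hL hPL hLP using hP.exists_le_isLinearOrderRel_imp
  exact ⟨_, realizedBy_card (ι := X × X) (L := fun p => L p.1 p.2) (fun p => hL p.1 p.2)
    fun x y => ⟨fun hxy p => hPL p.1 p.2 x y hxy, fun h => hLP x y (h (x, y))⟩⟩

theorem IsPartialOrderRel.realizedBy_posetDim [Finite X] (hP : IsPartialOrderRel P) :
    RealizedBy (posetDim P) P :=
  Nat.sInf_mem hP.exists_realizedBy

end Realizers

theorem stmt1_general {X : Type*} (P : X → X → Prop) (n : ℕ) (hP : RealizedBy n P) :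
    ∃ Ps : ℕ → X → X → Prop, RecPartialConjSeq n Ps ∧ Ps 1 = P := by
  obtain ⟨L, hL, hPL⟩ := hP
  refine ⟨reversalSeq L, recPartialConjSeq_reversalSeq hL, ?_⟩
  funext x y
  exact propext ⟨fun h => (hPL x y).2 fun i => h i (Nat.zero_le i), fun h i _ => (hPL x y).1 h i⟩

theorem stmt1 {X : Type*} [Fintype X] [Nonempty X]
    (P : X → X → Prop) (hP : IsPartialOrderRel P) (n : ℕ)
    (hdim : posetDim P = n) :
    ∃ Ps : ℕ → X → X → Prop, RecPartialConjSeq n Ps ∧ Ps 1 = P :=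
  stmt1_general P n (hdim ▸ hP.realizedBy_posetDim)
end

section
/- Let P and Q be partial orders on the same nonempty finite set X. If P and Q are conjugate partial orders, then P ∪ Q is a linear order on X. -/
/-!
Two distinct elements are never comparable in both orders, so a configuration producing such a
pair collapses. If `x P y Q z`, then neither `z P x` nor `z Q x` can hold unless two of the three
elements coincide: the former gives `z P y` next to `y Q z`, the latter `y Q x` next to `x P y`.
As `x` and `z` are comparable in one of the orders, `P ∪ Q` must relate `x` to `z`.
-/

theorem relUnion_comm {X : Type*} {P Q : X → X → Prop} {x y : X} :
    relUnion P Q x y ↔ relUnion Q P x y :=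
  or_comm

namespace ConjugateRel

variable {X : Type*} {P Q : X → X → Prop} {x y z : X}

theorem symm (hconj : ConjugateRel P Q) : ConjugateRel Q P :=
  fun x y hne => Or.symm (hconj x y hne)

theorem eq_of_compar (hconj : ConjugateRel P Q) (hP : Compar P x y) (hQ : Compar Q x y) :
    x = y := by
  by_contra hne
  rcases hconj x y hne with ⟨_, hnQ⟩ | ⟨_, hnP⟩
  · exact hnQ hQ
  · exact hnP hP

theorem relUnion_or_relUnion_of_ne (hconj : ConjugateRel P Q) (hne : x ≠ y) :
    relUnion P Q x y ∨ relUnion P Q y x := by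
  rcases hconj x y hne with ⟨hP, _⟩ | ⟨hQ, _⟩
  · exact hP.imp Or.inl Or.inl
  · exact hQ.imp Or.inr Or.inr

theorem relUnion_total (hconj : ConjugateRel P Q) (hrefl : ∀ x, P x x) (x y : X) :
    relUnion P Q x y ∨ relUnion P Q y x := by
  rcases eq_or_ne x y with rfl | hne
  · exact .inl (.inl (hrefl x))
  · exact hconj.relUnion_or_relUnion_of_ne hne

theorem relUnion_antisymm (hconj : ConjugateRel P Q)
    (hPanti : ∀ x y, P x y → P y x → x = y) (hQanti : ∀ x y, Q x y → Q y x → x = y)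
    (hxy : relUnion P Q x y) (hyx : relUnion P Q y x) : x = y := by
  rcases hxy with hPxy | hQxy <;> rcases hyx with hPyx | hQyx
  · exact hPanti x y hPxy hPyx
  · exact hconj.eq_of_compar (.inl hPxy) (.inr hQyx)
  · exact hconj.eq_of_compar (.inr hPyx) (.inl hQxy)
  · exact hQanti x y hQxy hQyx

theorem relUnion_of_left_of_right (hconj : ConjugateRel P Q)
    (hPtrans : ∀ x y z, P x y → P y z → P x z) (hQtrans : ∀ x y z, Q x y → Q y z → Q x z)
    (hxy : P x y) (hyz : Q y z) : relUnion P Q x z := by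
  rcases eq_or_ne x z with rfl | hne
  · obtain rfl : x = y := hconj.eq_of_compar (.inl hxy) (.inr hyz)
    exact .inl hxy
  rcases hconj.relUnion_or_relUnion_of_ne hne with hxz | hPzx | hQzx
  · exact hxz
  · have hzy : P z y := hPtrans z x y hPzx hxy
    obtain rfl : z = y := hconj.eq_of_compar (.inl hzy) (.inr hyz)
    exact .inl hxy
  · have hyx : Q y x := hQtrans y z x hyz hQzx
    obtain rfl : x = y := hconj.eq_of_compar (.inl hxy) (.inr hyx)
    exact .inr hyz

theorem relUnion_trans (hconj : ConjugateRel P Q)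
    (hPtrans : ∀ x y z, P x y → P y z → P x z) (hQtrans : ∀ x y z, Q x y → Q y z → Q x z)
    (hxy : relUnion P Q x y) (hyz : relUnion P Q y z) : relUnion P Q x z := by
  rcases hxy with hPxy | hQxy <;> rcases hyz with hPyz | hQyz
  · exact .inl (hPtrans x y z hPxy hPyz)
  · exact hconj.relUnion_of_left_of_right hPtrans hQtrans hPxy hQyz
  · exact relUnion_comm.mp (hconj.symm.relUnion_of_left_of_right hQtrans hPtrans hQxy hPyz)
  · exact .inr (hQtrans x y z hQxy hQyz)

end ConjugateRel

theorem stmt3_general {X : Type*} (P Q : X → X → Prop) (hP : IsPartialOrderRel P)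
    (hQ : IsPartialOrderRel Q) (hconj : ConjugateRel P Q) :
    IsLinearOrderRel (relUnion P Q) := by
  obtain ⟨hPrefl, hPanti, hPtrans⟩ := hP
  obtain ⟨-, hQanti, hQtrans⟩ := hQ
  exact ⟨hconj.relUnion_total hPrefl,
    fun _ _ => hconj.relUnion_antisymm hPanti hQanti,
    fun _ _ _ => hconj.relUnion_trans hPtrans hQtrans⟩

theorem stmt3 {X : Type*} [Fintype X] [Nonempty X]
    (P Q : X → X → Prop) (hP : IsPartialOrderRel P) (hQ : IsPartialOrderRel Q)
    (hconj : ConjugateRel P Q) :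
    IsLinearOrderRel (relUnion P Q) :=
  stmt3_general P Q hP hQ hconj
end

section
/- Let A and Q be partial orders on a nonempty finite set X such that Q is a partial-conjugate of A. If there exist linear orders L_1,…,L_m on X with A ∪ Q = L_1 ∩ ⋯ ∩ L_m, then there exists a linear order L_{m+1} on X such that A = L_1 ∩ ⋯ ∩ L_m ∩ L_{m+1}. -/
section

variable {X : Type*} {A Q : X → X → Prop}

theorem IsPartialOrderRel.exists_isLinearOrderRel_extension {P : X → X → Prop}
    (hP : IsPartialOrderRel P) :
    ∃ L : X → X → Prop, IsLinearOrderRel L ∧ ∀ x y, P x y → L x y := by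
  obtain ⟨P_refl, P_antisymm, P_trans⟩ := hP
  have : IsPartialOrder X P := { refl := P_refl, antisymm := P_antisymm, trans := P_trans }
  obtain ⟨L, hL, P_le_L⟩ := extend_partialOrder P
  exact ⟨L, ⟨hL.total, hL.antisymm, hL.trans⟩, P_le_L⟩

theorem iff_relUnion_and_of_antisymm {L : X → X → Prop} (A_refl : ∀ x, A x x)
    (L_antisymm : ∀ x y, L x y → L y x → x = y)
    (hL : ∀ x y, relUnion A (dualRel Q) x y → L x y) (x y : X) :
    A x y ↔ relUnion A Q x y ∧ L x y := by
  refine ⟨fun hxy => ⟨Or.inl hxy, hL x y (Or.inl hxy)⟩, ?_⟩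
  rintro ⟨hxy | hxy, L_xy⟩
  · exact hxy
  · -- `L` reverses every `Q`-comparison, so the only pairs of `Q` inside `L` are diagonal.
    have L_yx : L y x := hL y x (Or.inr hxy)
    obtain rfl : x = y := L_antisymm x y L_xy L_yx
    exact A_refl x

theorem stmt14_general {ι : Sort*} {L : ι → X → X → Prop} (A_refl : ∀ x, A x x)
    (hAQ : IsPartialOrderRel (Relation.TransGen (relUnion A (dualRel Q))))
    (hunion : ∀ x y, relUnion A Q x y ↔ ∀ i, L i x y) :
    ∃ L' : X → X → Prop, IsLinearOrderRel L' ∧ ∀ x y, A x y ↔ (∀ i, L i x y) ∧ L' x y := by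
  obtain ⟨L', hL', closure_le_L'⟩ := hAQ.exists_isLinearOrderRel_extension
  refine ⟨L', hL', fun x y => ?_⟩
  rw [← hunion]
  exact iff_relUnion_and_of_antisymm A_refl hL'.2.1
    (fun x y hxy => closure_le_L' x y (.single hxy)) x y

end

theorem stmt14 {X : Type*} [Fintype X] [Nonempty X]
    (A Q : X → X → Prop) (hA : IsPartialOrderRel A) (hQ : IsPartialOrderRel Q)
    (hpc : IsPartialConjugate A Q)
    (m : ℕ) (L : ℕ → X → X → Prop)
    (hL : ∀ i, 1 ≤ i → i ≤ m → IsLinearOrderRel (L i))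
    (hunion : ∀ x y, relUnion A Q x y ↔ ∀ i, 1 ≤ i → i ≤ m → L i x y) :
    ∃ L' : X → X → Prop, IsLinearOrderRel L' ∧
      ∀ x y, A x y ↔ ((∀ i, 1 ≤ i → i ≤ m → L i x y) ∧ L' x y) := by
  simpa only [Subtype.forall, and_imp] using
    stmt14_general (L := fun i : {i // 1 ≤ i ∧ i ≤ m} => L i) hA.1 hpc.2.2
      (by simpa only [Subtype.forall, and_imp] using hunion)
end
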